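/- arXiv:2510.05786 — 9 statements merged into one kernel-verified Lean document; each statement's English description precedes it below -/
import Mathlib

section
/- Let G = (V,E) be a DAMG, R a commutative ring, q : E → R a normalized weight function, A an R-module, v : V → A a value function with Möbius transform w = v' with respect to G, and W ⊆ V a set of weak elements for (G,v) (i.e. w(z) = 0 for all z ∈ W). Then: (1) the Möbius transform of the restriction v|_{V∖W} with respect to the projected DAMG G^{∖W} equals the restriction w|_{V∖W}; (2) the projection w^{∖W} equals w|_{V∖W}; (3) consequently the projected value function v^{∖W}(y) := Σ_{x ∈ Anc^{G^{∖W}}(y)} w^{∖W}(x) equals the restriction v|_{V∖W}. -/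
open scoped Classical

/-- A directed multigraph: finite sets of vertices/edges with tail and head maps. -/
structure MGraph (V E : Type*) where
  tl : E → V
  hd : E → V

namespace MGraph

variable {V E R A : Type*}

/-- `G` is a directed acyclic multigraph (DAMG) if it admits a topological ordering,
i.e. a linear (injective) order on the vertices such that tails precede heads. -/
def IsDAMG (G : MGraph V E) : Prop :=
  ∃ ord : V → ℕ, Function.Injective ord ∧ ∀ e : E, ord (G.tl e) < ord (G.hd e)

/-- `G.IsPath x y l` : the list of edges `l` is a directed path from `x` to `y`. -/
def IsPath (G : MGraph V E) : V → V → List E → Prop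
  | x, y, [] => x = y
  | x, y, e :: es => G.tl e = x ∧ G.IsPath (G.hd e) y es

/-- the set `E(x,y)` of edges from `x` to `y` -/
def edges (G : MGraph V E) (x y : V) : Set E := {e | G.tl e = x ∧ G.hd e = y}

/-- there is a directed path from `x` to `y` (possibly trivial) -/
def Reaches (G : MGraph V E) (x y : V) : Prop := ∃ l : List E, G.IsPath x y l

/-- ancestors of `y` (including `y`) -/
def anc (G : MGraph V E) (y : V) : Set V := {x | G.Reaches x y}

/-- descendants of `x` (including `x`) -/
def desc (G : MGraph V E) (x : V) : Set V := {y | G.Reaches x y}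

/-- parents of `y` -/
def pa (G : MGraph V E) (y : V) : Set V := {x | ∃ e : E, G.tl e = x ∧ G.hd e = y}

/-- roots (sources) of `G` -/
def roots (G : MGraph V E) : Set V := {x | G.pa x = ∅}

/-- leaves (sinks) of `G` -/
def leaves (G : MGraph V E) : Set V := {x | ∀ e : E, G.tl e ≠ x}

/-- `π(x,y)` : the number of directed paths from `x` to `y` -/
noncomputable def nPaths (G : MGraph V E) (x y : V) : ℕ :=
  {l : List E | G.IsPath x y l}.ncard

/-- `π(y)` : the number of directed paths from roots to `y` -/
noncomputable def nPathsRt (G : MGraph V E) (y : V) : ℕ :=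
  ∑ᶠ r ∈ G.roots, G.nPaths r y

/-- pairwise weight `q(x|y) := Σ_{e ∈ E(x,y)} q(e)` -/
noncomputable def pw [AddCommMonoid R] (G : MGraph V E) (q : E → R) (x y : V) : R :=
  ∑ᶠ e ∈ G.edges x y, q e

/-- a weight function is normalized if pairwise weights into any non-root sum to 1 -/
def Normalized [CommRing R] (G : MGraph V E) (q : E → R) : Prop :=
  ∀ y : V, y ∉ G.roots → (∑ᶠ x : V, G.pw q x y) = 1

/-- `w` is the Möbius transform (synergy function) of `v` w.r.t. `G` -/
def IsMoebiusTransform [AddCommGroup A] (G : MGraph V E) (v w : V → A) : Prop :=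
  ∀ x : V, w x = v x - ∑ᶠ y ∈ G.anc x \ {x}, w y

/-- `μ` is the Möbius function of `G` -/
def IsMoebiusFunction (G : MGraph V E) (μ : V → V → ℤ) : Prop :=
  (∀ x y : V, x ∉ G.anc y → μ x y = 0) ∧
  (∀ x : V, μ x x = 1) ∧
  (∀ x y : V, x ∈ G.anc y → x ≠ y →
    μ x y = -(∑ᶠ z ∈ (G.desc x ∩ G.anc y) \ {y}, μ x z))

/-- `s` is the total path weight function of the edge weight function `q` -/
def IsTotalWeight [CommRing R] (G : MGraph V E) (q : E → R) (s : V → V → R) : Prop :=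
  (∀ x y : V, y ∉ G.desc x → s x y = 0) ∧
  (∀ x : V, s x x = 1) ∧
  (∀ x y : V, y ∈ G.desc x → y ≠ x → s x y = ∑ᶠ z ∈ G.pa y, s x z * G.pw q z y)

/-- `τ : V → R` is the extension of a root weight function via the recursion
`τ(y) = Σ_{z ∈ Pa(y)} τ(z)·ς(z,y)` for non-roots `y` -/
def IsRootExtension [CommRing R] (G : MGraph V E) (ς : E → R) (τ : V → R) : Prop :=
  ∀ y : V, y ∉ G.roots → τ y = ∑ᶠ z ∈ G.pa y, τ z * G.pw ς z y

/-- the list of vertices visited by a path starting at `x` -/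
def pathVerts (G : MGraph V E) (x : V) (l : List E) : List V := x :: l.map G.hd

/-- `X` is a horizontal subset of `G` : every directed path from a root to a leaf
contains exactly one element of `X` -/
def Horizontal (G : MGraph V E) (X : Set V) : Prop :=
  ∀ r ∈ G.roots, ∀ lf ∈ G.leaves, ∀ p : List E, G.IsPath r lf p →
    (G.pathVerts r p).countP (fun v => decide (v ∈ X)) = 1

/-- the path uniform weight function `q_G(e) := π(t(e))/π(h(e))` -/
noncomputable def pathUniform (G : MGraph V E) : E → ℚ :=
  fun e => (G.nPathsRt (G.tl e) : ℚ) / (G.nPathsRt (G.hd e) : ℚ)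

/-- the unanimity value function centred at `y` -/
noncomputable def zeta [CommRing R] (G : MGraph V E) (y : V) : V → R :=
  fun x => if x ∈ G.desc y then (1 : R) else 0

/-! ### Projection onto the complement of a single element -/

/-- the edge type of the projection `G^{∖z}` :
old edges avoiding `z`, together with a new edge for every pair of edges through `z` -/
def proj1E (G : MGraph V E) (z : V) : Type _ :=
  {e : E // G.tl e ≠ z ∧ G.hd e ≠ z} ⊕
  {p : E × E // G.hd p.1 = z ∧ G.tl p.2 = z ∧ G.tl p.1 ≠ z ∧ G.hd p.2 ≠ z}

/-- the projection `G^{∖z}` of `G` onto the complement of `z` -/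
def proj1 (G : MGraph V E) (z : V) : MGraph {x : V // x ≠ z} (G.proj1E z) where
  tl := Sum.elim (fun e => ⟨G.tl e.1, e.2.1⟩) (fun p => ⟨G.tl p.1.1, p.2.2.2.1⟩)
  hd := Sum.elim (fun e => ⟨G.hd e.1, e.2.2⟩) (fun p => ⟨G.hd p.1.2, p.2.2.2.2⟩)

/-- the projected weight function `q^{∖z}` -/
def proj1Q [CommRing R] (G : MGraph V E) (z : V) (q : E → R) : G.proj1E z → R :=
  Sum.elim (fun e => q e.1) (fun p => q p.1.1 * q p.1.2)

/-- the single-element projection `w^{∖z}(x) := w(x) + q(x|z)·w(z)` of a synergy function -/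
noncomputable def wProjOne [CommRing R] [AddCommGroup A] [Module R A]
    (G : MGraph V E) (q : E → R) (w : V → A) (z : V) : {x : V // x ≠ z} → A :=
  fun x => w x.1 + G.pw q x.1 z • w z

/-! ### Projection onto the complement of a subset -/

/-- consecutive edges of the list compose -/
def IsChain (G : MGraph V E) : List E → Prop
  | [] => True
  | [_] => True
  | e :: e' :: es => G.hd e = G.tl e' ∧ G.IsChain (e' :: es)

/-- the interior vertices of a path (all visited vertices except the endpoints) -/
def interior (G : MGraph V E) : List E → List V
  | [] => []
  | [_] => []
  | e :: e' :: es => G.hd e :: G.interior (e' :: es)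

/-- an edge of the projection `G^{∖S}` : a nonempty directed path of `G` whose
interior vertices lie in `S` and whose endpoints lie outside `S`
(iterating `E^{∖z}(x,y) := E(x,y) ⊔ (E(x,z) × E(z,y))` over the elements of `S`) -/
structure ProjEdge (G : MGraph V E) (S : Set V) where
  first : E
  rest : List E
  chain : G.IsChain (first :: rest)
  tl_notin : G.tl first ∉ S
  hd_notin : G.hd ((first :: rest).getLast (List.cons_ne_nil _ _)) ∉ S
  interior_mem : ∀ v ∈ G.interior (first :: rest), v ∈ S

/-- the projection `G^{∖S}` of `G` onto the complement of the subset `S` -/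
def projG (G : MGraph V E) (S : Set V) : MGraph {x : V // x ∉ S} (G.ProjEdge S) where
  tl := fun p => ⟨G.tl p.first, p.tl_notin⟩
  hd := fun p => ⟨G.hd ((p.first :: p.rest).getLast (List.cons_ne_nil _ _)), p.hd_notin⟩

/-- the projected weight function `q^{∖S}` (weights multiply along collapsed paths) -/
def projQ [CommRing R] (G : MGraph V E) (S : Set V) (q : E → R) :
    G.ProjEdge S → R :=
  fun p => ((p.first :: p.rest).map q).prod

/-! ### Iterated one-element projections of pairwise weights and synergy functions -/

/-- one projection step on pairwise weights: `q^{∖z}(x|y) = q(x|y) + q(x|z)·q(z|y)` -/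
def pwStep [CommRing R] (Q : V → V → R) (z : V) : V → V → R :=
  fun x y => Q x y + Q x z * Q z y

/-- one projection step on a synergy function: `w^{∖z}(x) = w(x) + q(x|z)·w(z)` -/
def wStep [CommRing R] [AddCommGroup A] [Module R A]
    (Q : V → V → R) (w : V → A) (z : V) : V → A :=
  fun x => w x + Q x z • w z

/-- iterated one-element projections along a list of vertices -/
def projIter [CommRing R] [AddCommGroup A] [Module R A] :
    List V → (V → V → R) → (V → A) → ((V → V → R) × (V → A))
  | [], Q, w => (Q, w)
  | z :: zs, Q, w => projIter zs (pwStep Q z) (wStep Q w z)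

/-! ### Subgraph on a subset of vertices -/

/-- edges of `G` with both endpoints in `S` -/
def subE (G : MGraph V E) (S : Set V) : Type _ := {e : E // G.tl e ∈ S ∧ G.hd e ∈ S}

/-- the subgraph of `G` on the vertex subset `S` -/
def subgraph (G : MGraph V E) (S : Set V) : MGraph ↥S (G.subE S) where
  tl := fun e => ⟨G.tl e.1, e.2.1⟩
  hd := fun e => ⟨G.hd e.1, e.2.2⟩

/-- the canonical identification `(V∖{z})∖{u} ≃ (V∖{u})∖{z}` -/
def swapCompl (z u : V) (hzu : z ≠ u) :
    {y : {x : V // x ≠ z} // y ≠ ⟨u, Ne.symm hzu⟩} ≃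
      {y : {x : V // x ≠ u} // y ≠ ⟨z, hzu⟩} where
  toFun y := ⟨⟨y.1.1, fun h => y.2 (Subtype.ext h)⟩, fun h => y.1.2 (congrArg Subtype.val h)⟩
  invFun y := ⟨⟨y.1.1, fun h => y.2 (Subtype.ext h)⟩, fun h => y.1.2 (congrArg Subtype.val h)⟩
  left_inv y := rfl
  right_inv y := rfl

end MGraph

namespace MGraph

variable {V E R A : Type*}

theorem wk_isPath_append (G : MGraph V E) {x y z : V} {l l' : List E}
    (h : G.IsPath x y l) (h' : G.IsPath y z l') : G.IsPath x z (l ++ l') := by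
  induction l generalizing x with
  | nil => simp only [IsPath] at h; subst h; simpa using h'
  | cons e es ih => exact ⟨h.1, ih h.2⟩

theorem wk_chain_isPath (G : MGraph V E) (e : E) (es : List E) (h : G.IsChain (e :: es)) :
    G.IsPath (G.tl e) (G.hd ((e :: es).getLast (List.cons_ne_nil _ _))) (e :: es) := by
  induction es generalizing e with
  | nil => exact ⟨rfl, rfl⟩
  | cons f fs ih =>
    refine ⟨rfl, ?_⟩
    rw [h.1, List.getLast_cons (List.cons_ne_nil _ _)]
    exact ih f h.2

theorem wk_reaches_of_proj (G : MGraph V E) (W : Set V) {x y : {x : V // x ∉ W}}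
    (h : (G.projG W).Reaches x y) : G.Reaches x.1 y.1 := by
  obtain ⟨l, hl⟩ := h
  induction l generalizing x with
  | nil => exact ⟨[], congrArg Subtype.val hl⟩
  | cons p ps ih =>
    obtain ⟨l', hl'⟩ := ih hl.2
    have h1 := G.wk_chain_isPath p.first p.rest p.chain
    have h2 : G.tl p.first = x.1 := congrArg Subtype.val hl.1
    rw [h2] at h1
    exact ⟨_, G.wk_isPath_append h1 hl'⟩

theorem wk_proj_edge (G : MGraph V E) (W : Set V) (y : {x : V // x ∉ W}) (e : E) (es : List E)
    (h : G.IsPath (G.hd e) y.1 es) :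
    ∃ z : {x : V // x ∉ W}, (G.projG W).Reaches z y ∧ ∃ rest : List E,
      G.IsChain (e :: rest) ∧ G.hd ((e :: rest).getLast (List.cons_ne_nil _ _)) = z.1 ∧
      ∀ u ∈ G.interior (e :: rest), u ∈ W := by
  induction es generalizing e with
  | nil => exact ⟨y, ⟨[], rfl⟩, [], trivial, h, by simp [interior]⟩
  | cons f fs ih =>
    obtain ⟨z, ⟨l, hl⟩, rest, hc, hlast, hint⟩ := ih f h.2
    by_cases hW : G.hd e ∈ W
    · refine ⟨z, ⟨l, hl⟩, f :: rest, ⟨h.1.symm, hc⟩, ?_, ?_⟩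
      · rw [List.getLast_cons (List.cons_ne_nil _ _)]; exact hlast
      · intro u hu
        simp only [interior, List.mem_cons] at hu
        rcases hu with rfl | hu
        · exact hW
        · exact hint u hu
    · have hz := z.2
      rw [← hlast] at hz
      refine ⟨⟨G.hd e, hW⟩, ⟨⟨f, rest, hc, h.1 ▸ hW, hz, hint⟩ :: l, ?_, ?_⟩,
        [], trivial, rfl, by simp [interior]⟩
      · exact Subtype.ext h.1
      · have : (G.projG W).hd ⟨f, rest, hc, h.1 ▸ hW, hz, hint⟩ = z := Subtype.ext hlast
        rw [this]; exact hl

theorem wk_reaches_iff (G : MGraph V E) (W : Set V) (x y : {x : V // x ∉ W}) :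
    (G.projG W).Reaches x y ↔ G.Reaches x.1 y.1 := by
  refine ⟨G.wk_reaches_of_proj W, ?_⟩
  rintro ⟨l, hl⟩
  cases l with
  | nil => exact ⟨[], Subtype.ext hl⟩
  | cons e es =>
    obtain ⟨z, ⟨l, hl'⟩, rest, hc, hlast, hint⟩ := G.wk_proj_edge W y e es hl.2
    have hx := x.2
    rw [← hl.1] at hx
    have hz := z.2
    rw [← hlast] at hz
    refine ⟨⟨e, rest, hc, hx, hz, hint⟩ :: l, Subtype.ext hl.1, ?_⟩
    have : (G.projG W).hd ⟨e, rest, hc, hx, hz, hint⟩ = z := Subtype.ext hlast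
    rw [this]; exact hl'

theorem wk_ord_le (G : MGraph V E) (ord : V → ℕ) (ho : ∀ e : E, ord (G.tl e) < ord (G.hd e))
    {x y : V} (h : G.Reaches x y) : ord x ≤ ord y := by
  obtain ⟨l, hl⟩ := h
  induction l generalizing x with
  | nil => exact le_of_eq (congrArg ord hl)
  | cons e es ih =>
    have h1 := ih hl.2
    have h2 := ho e
    rw [hl.1] at h2
    omega

theorem wk_sum [AddCommGroup A] (W : Set V) (w : V → A) (hweak : ∀ z ∈ W, w z = 0)
    (S : Set V) (T : Set {x : V // x ∉ W}) (hST : ∀ x, x ∈ T ↔ x.1 ∈ S) :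
    ∑ᶠ x ∈ T, w x.1 = ∑ᶠ x ∈ S, w x := by
  rw [← finsum_mem_image (f := w) (g := Subtype.val) Subtype.val_injective.injOn]
  apply finsum_mem_inter_support_eq
  ext x
  simp only [Set.mem_inter_iff, Set.mem_image, Function.mem_support]
  constructor
  · rintro ⟨⟨a, ha, rfl⟩, h⟩
    exact ⟨(hST a).1 ha, h⟩
  · rintro ⟨hS, h⟩
    exact ⟨⟨⟨x, fun hx => h (hweak x hx)⟩, (hST _).2 hS, rfl⟩, h⟩

theorem wk_projIter [CommRing R] [AddCommGroup A] [Module R A] (l : List V) (Q : V → V → R)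
    (w : V → A) (h : ∀ z ∈ l, w z = 0) : (projIter l Q w).2 = w := by
  induction l generalizing Q with
  | nil => rfl
  | cons z zs ih =>
    have : wStep Q w z = w := by
      funext x
      simp [wStep, h z (by simp)]
    simp only [projIter, this]
    exact ih _ fun z hz => h z (by simp [hz])

end MGraph

/-- **Möbius transforms and projections ignore weak elements.**
Let `q` be a normalized weight function on the DAMG `G`, `w` the Möbius transform
of `v`, and `W` a set of weak elements for `(G,v)` (enumerated by the duplicate-free
list `lW`; the order of the iterated one-element projections is immaterial). Then:
(1) the Möbius transform of the restriction `v|_{V∖W}` w.r.t. the projected DAMG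
`G^{∖W}` equals the restriction `w|_{V∖W}`;
(2) the projection `w^{∖W}` equals the restriction `w|_{V∖W}`;
(3) the projected value function `v^{∖W}(y) := Σ_{x ∈ Anc^{G^{∖W}}(y)} w^{∖W}(x)`
equals the restriction `v|_{V∖W}`. -/
theorem moebius_weak_elements
    {V E R A : Type*} [Finite V] [Finite E] [CommRing R] [AddCommGroup A] [Module R A]
    (G : MGraph V E) (hG : G.IsDAMG)
    (q : E → R) (hq : G.Normalized q)
    (v w : V → A) (hw : G.IsMoebiusTransform v w)
    (W : Set V) (hweak : ∀ z ∈ W, w z = 0)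
    (lW : List V) (hnd : lW.Nodup) (hmem : ∀ z : V, z ∈ lW ↔ z ∈ W) :
    (∀ w' : {x : V // x ∉ W} → A,
        (G.projG W).IsMoebiusTransform (fun x => v x.1) w' →
        ∀ x : {x : V // x ∉ W}, w' x = w x.1) ∧
    (∀ x : V, x ∉ W → (MGraph.projIter lW (G.pw q) w).2 x = w x) ∧
    (∀ y : {x : V // x ∉ W},
        (∑ᶠ x ∈ (G.projG W).anc y, (MGraph.projIter lW (G.pw q) w).2 x.1) = v y.1) := by
  have hiter : (MGraph.projIter lW (G.pw q) w).2 = w :=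
    MGraph.wk_projIter lW _ w fun z hz => hweak z ((hmem z).1 hz)
  obtain ⟨ord, hinj, ho⟩ := hG
  refine ⟨?_, fun x _ => by rw [hiter], ?_⟩
  · intro w' hw' x
    induction hn : ord x.1 using Nat.strong_induction_on generalizing x with
    | _ n ih =>
      rw [hw' x, hw x.1]
      congr 1
      rw [← MGraph.wk_sum W w hweak (G.anc x.1 \ {x.1}) ((G.projG W).anc x \ {x})]
      · refine finsum_mem_congr rfl ?_
        rintro y ⟨hy, hne⟩
        refine ih (ord y.1) ?_ y rfl
        have h1 := G.wk_ord_le ord ho ((G.wk_reaches_iff W y x).1 hy)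
        have h2 : ord y.1 ≠ ord x.1 := fun h => hne (Subtype.ext (hinj h))
        omega
      · intro y
        simp only [Set.mem_diff, Set.mem_singleton_iff, MGraph.anc, Set.mem_setOf_eq,
          G.wk_reaches_iff W, Subtype.ext_iff]
  · intro y
    rw [hiter, MGraph.wk_sum W w hweak (G.anc y.1) ((G.projG W).anc y)
      fun x => G.wk_reaches_iff W x y]
    have hy : y.1 ∈ G.anc y.1 := ⟨[], rfl⟩
    have h := hw y.1
    have hs : G.anc y.1 = insert y.1 (G.anc y.1 \ {y.1}) := by
      rw [Set.insert_diff_singleton, Set.insert_eq_of_mem hy]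
    rw [hs, finsum_mem_insert _ (by simp) (Set.toFinite _), h]
    abel
end

section
/- Let G = (V,E) be a DAMG, R a commutative ring, ς : E → R an edge weight function with total path weight function σ, and τ : Rt(G) → R a root weight function extended to τ : V → R. Then for every horizontal subset X ⊆ V of G and every y ∈ Desc(X) := ∪_{x ∈ X} Desc(x), we have τ(y) = Σ_{x ∈ X} τ(x) · σ(x,y). In particular, taking X = Rt(G), we have τ(y) = Σ_{r ∈ Rt(G)} τ(r) · σ(r,y) for every y ∈ V. -/
open scoped Classical

namespace MGraph

theorem isPath_append' {V E : Type*} (G : MGraph V E) {y z : V} {q : List E}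
    (hq : G.IsPath y z q) : ∀ (p : List E) (x : V), G.IsPath x y p → G.IsPath x z (p ++ q)
  | [], x, hp => by
    have h : x = y := hp
    subst h
    exact hq
  | e :: es, x, hp => ⟨hp.1, isPath_append' G hq es _ hp.2⟩

theorem reaches_trans' {V E : Type*} (G : MGraph V E) {x y z : V}
    (h : G.Reaches x y) (h' : G.Reaches y z) : G.Reaches x z := by
  obtain ⟨p, hp⟩ := h
  obtain ⟨q, hq⟩ := h'
  exact ⟨p ++ q, isPath_append' G hq p x hp⟩

theorem reaches_edge' {V E : Type*} (G : MGraph V E) (e : E) : G.Reaches (G.tl e) (G.hd e) :=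
  ⟨[e], rfl, rfl⟩

theorem reaches_refl' {V E : Type*} (G : MGraph V E) (x : V) : G.Reaches x x :=
  ⟨[], rfl⟩

theorem mem_pathVerts' {V E : Type*} (G : MGraph V E) {y v : V} :
    ∀ (p : List E) (x : V), G.IsPath x y p → v ∈ G.pathVerts x p →
      G.Reaches x v ∧ G.Reaches v y
  | [], x, hp, hv => by
    have h : x = y := hp
    subst h
    have h2 : v = x := by simpa [pathVerts] using hv
    subst h2
    exact ⟨G.reaches_refl' _, G.reaches_refl' _⟩
  | e :: es, x, hp, hv => by
    have hx : G.tl e = x := hp.1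
    subst hx
    have hv' : v = G.tl e ∨ v ∈ G.pathVerts (G.hd e) es := by
      simpa [pathVerts] using hv
    rcases hv' with rfl | h
    · exact ⟨G.reaches_refl' _, ⟨e :: es, hp⟩⟩
    · have := mem_pathVerts' G es _ hp.2 h
      exact ⟨G.reaches_trans' (G.reaches_edge' e) this.1, this.2⟩

theorem end_mem_pathVerts' {V E : Type*} (G : MGraph V E) {y : V} :
    ∀ (p : List E) (x : V), G.IsPath x y p → y ∈ G.pathVerts x p
  | [], x, hp => by
    have h : x = y := hp
    simp [pathVerts, h]
  | e :: es, x, hp => by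
    have := end_mem_pathVerts' G es _ hp.2
    exact List.mem_cons_of_mem _ this

theorem ord_le' {V E : Type*} (G : MGraph V E) (ord : V → ℕ)
    (ho : ∀ e : E, ord (G.tl e) < ord (G.hd e)) {y : V} :
    ∀ (p : List E) (x : V), G.IsPath x y p → ord x ≤ ord y
  | [], x, hp => by
    have h : x = y := hp
    rw [h]
  | e :: es, x, hp => by
    have h1 := ord_le' G ord ho es _ hp.2
    have h2 := ho e
    rw [hp.1] at h2
    omega

theorem exists_root' {V E : Type*} (G : MGraph V E) (ord : V → ℕ)
    (ho : ∀ e : E, ord (G.tl e) < ord (G.hd e)) :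
    ∀ (n : ℕ) (y : V), ord y < n → ∃ r ∈ G.roots, G.Reaches r y
  | 0, _, h => by omega
  | n + 1, y, h => by
    by_cases hy : y ∈ G.roots
    · exact ⟨y, hy, G.reaches_refl' _⟩
    · obtain ⟨z, e, rfl, rfl⟩ := Set.nonempty_iff_ne_empty.mpr hy
      obtain ⟨r, hr, hrz⟩ := exists_root' G ord ho n (G.tl e) (by have := ho e; omega)
      exact ⟨r, hr, G.reaches_trans' hrz (G.reaches_edge' e)⟩

theorem exists_leaf' {V E : Type*} (G : MGraph V E) (ord : V → ℕ)
    (ho : ∀ e : E, ord (G.tl e) < ord (G.hd e)) (N : ℕ) (hN : ∀ v, ord v ≤ N) :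
    ∀ (n : ℕ) (y : V), N < ord y + n → ∃ l ∈ G.leaves, G.Reaches y l
  | 0, y, h => by have := hN y; omega
  | n + 1, y, h => by
    by_cases hy : y ∈ G.leaves
    · exact ⟨y, hy, G.reaches_refl' _⟩
    · have : ∃ e, G.tl e = y := by
        by_contra hc
        exact hy fun e he => hc ⟨e, he⟩
      obtain ⟨e, rfl⟩ := this
      obtain ⟨r, hr, hrz⟩ := exists_leaf' G ord ho N hN n (G.hd e) (by have := ho e; omega)
      exact ⟨r, hr, G.reaches_trans' (G.reaches_edge' e) hrz⟩

/-- The core recursion argument. -/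
theorem core' {V E R : Type*} [Finite V] [CommRing R]
    (G : MGraph V E) (ord : V → ℕ) (ho : ∀ e : E, ord (G.tl e) < ord (G.hd e))
    (ς : E → R) (σ : V → V → R) (hσ : G.IsTotalWeight ς σ)
    (τ : V → R) (hτ : G.IsRootExtension ς τ) (X : Set V)
    (ha : ∀ x ∈ X, ∀ x' ∈ X, G.Reaches x x' → x = x')
    (hb : ∀ e : E, G.hd e ∉ X → (∃ x ∈ X, G.Reaches x (G.hd e)) →
      ∃ x ∈ X, G.Reaches x (G.tl e)) :
    ∀ (n : ℕ) (y : V), ord y < n → (∃ x ∈ X, G.Reaches x y) → τ y = ∑ᶠ x ∈ X, τ x * σ x y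
  | 0, _, h => by omega
  | n + 1, y, h => by
    intro hy
    obtain ⟨h0, h1, h2⟩ := hσ
    by_cases hyX : y ∈ X
    · have key : ∀ x, x ≠ y → (∑ᶠ (_ : x ∈ X), τ x * σ x y) = 0 := by
        intro x hxy
        by_cases hx : x ∈ X
        · rw [h0 x y (fun hr => hxy (ha x hx y hyX hr)), mul_zero]
          simp
        · simp [hx]
      rw [finsum_eq_single _ y key]
      simp [hyX, h1]
    · have hroot : y ∉ G.roots := by
        obtain ⟨x, hx, p, hp⟩ := hy
        intro hr
        have hend := G.end_mem_pathVerts' p x hp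
        rw [pathVerts, List.mem_cons, List.mem_map] at hend
        rcases hend with rfl | ⟨e, _, he⟩
        · exact hyX hx
        · have : G.tl e ∈ G.pa y := ⟨e, rfl, he⟩
          rw [show G.pa y = ∅ from hr] at this
          exact this
      have hrec : ∀ x ∈ X, σ x y = ∑ᶠ z ∈ G.pa y, σ x z * G.pw ς z y := by
        intro x hx
        by_cases hxy : G.Reaches x y
        · exact h2 x y hxy (fun hh => hyX (hh ▸ hx))
        · rw [h0 x y hxy]
          symm
          apply finsum_mem_eq_zero_of_forall_eq_zero
          rintro z ⟨e, rfl, rfl⟩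
          rw [h0 x _ (fun hr => hxy (G.reaches_trans' hr (G.reaches_edge' e))), zero_mul]
      have hR : (∑ᶠ x ∈ X, τ x * σ x y)
          = ∑ᶠ x ∈ X, ∑ᶠ z ∈ G.pa y, τ x * (σ x z * G.pw ς z y) := by
        apply finsum_mem_congr rfl
        intro x hx
        rw [hrec x hx, mul_finsum_mem' _ _ (Set.toFinite _)]
      rw [hR, finsum_mem_comm _ (Set.toFinite _) (Set.toFinite _), hτ y hroot]
      apply finsum_mem_congr rfl
      rintro z ⟨e, rfl, rfl⟩
      have hlt := ho e
      rw [core' G ord ho ς σ ⟨h0, h1, h2⟩ τ hτ X ha hb n (G.tl e) (by omega) (hb e hyX hy),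
        finsum_mem_mul' _ _ (Set.toFinite _)]
      apply finsum_mem_congr rfl
      intro x hx
      ring

theorem horiz_a' {V E : Type*} [Finite V] (G : MGraph V E) (hG : G.IsDAMG) (X : Set V)
    (hX : G.Horizontal X) : ∀ x ∈ X, ∀ x' ∈ X, G.Reaches x x' → x = x' := by
  obtain ⟨ord, _, ho⟩ := hG
  obtain ⟨N, hN⟩ := (Set.finite_range ord).bddAbove
  have hN' : ∀ v, ord v ≤ N := fun v => hN ⟨v, rfl⟩
  rintro x hx x' hx' ⟨q, hq⟩
  by_contra hne
  obtain ⟨r, hr, p, hp⟩ := G.exists_root' ord ho _ x (Nat.lt_succ_self _)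
  obtain ⟨l, hl, s, hs⟩ := G.exists_leaf' ord ho N hN' (N + 1) x' (by omega)
  have h1 := hX r hr l hl _ (G.isPath_append' (G.isPath_append' hs q x hq) p r hp)
  have hsplit : G.pathVerts r (p ++ (q ++ s)) = G.pathVerts r p ++ (q ++ s).map G.hd := by
    simp [pathVerts]
  rw [hsplit, List.countP_append] at h1
  have c1 : 0 < (G.pathVerts r p).countP (fun v => decide (v ∈ X)) :=
    List.countP_pos_iff.mpr ⟨x, G.end_mem_pathVerts' p r hp, by simpa using hx⟩
  have hm : x' ∈ (q ++ s).map G.hd := by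
    have hend := G.end_mem_pathVerts' q x hq
    rw [pathVerts, List.mem_cons] at hend
    rcases hend with h | h
    · exact absurd h.symm hne
    · rw [List.map_append]
      exact List.mem_append_left _ h
  have c2 : 0 < ((q ++ s).map G.hd).countP (fun v => decide (v ∈ X)) :=
    List.countP_pos_iff.mpr ⟨x', hm, by simpa using hx'⟩
  omega

theorem horiz_b' {V E : Type*} [Finite V] (G : MGraph V E) (hG : G.IsDAMG) (X : Set V)
    (hX : G.Horizontal X) (e : E) (he : G.hd e ∉ X) (hy : ∃ x ∈ X, G.Reaches x (G.hd e)) :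
    ∃ x ∈ X, G.Reaches x (G.tl e) := by
  have ha := G.horiz_a' hG X hX
  obtain ⟨ord, hinj, ho⟩ := hG
  obtain ⟨N, hN⟩ := (Set.finite_range ord).bddAbove
  have hN' : ∀ v, ord v ≤ N := fun v => hN ⟨v, rfl⟩
  obtain ⟨x, hx, hxy⟩ := hy
  obtain ⟨r, hr, p, hp⟩ := G.exists_root' ord ho _ (G.tl e) (Nat.lt_succ_self _)
  obtain ⟨l, hl, s, hs⟩ := G.exists_leaf' ord ho N hN' (N + 1) (G.hd e) (by omega)
  have hes : G.IsPath (G.tl e) l (e :: s) := ⟨rfl, hs⟩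
  have h1 := hX r hr l hl _ (G.isPath_append' hes p r hp)
  obtain ⟨v, hv, hvX⟩ := List.countP_pos_iff.mp (by rw [h1]; exact Nat.one_pos)
  have hvX' : v ∈ X := by simpa using hvX
  have hsplit : G.pathVerts r (p ++ e :: s) = G.pathVerts r p ++ G.pathVerts (G.hd e) s := by
    simp [pathVerts]
  rw [hsplit, List.mem_append] at hv
  rcases hv with hv | hv
  · exact ⟨v, hvX', (G.mem_pathVerts' p r hp hv).2⟩
  · exfalso
    obtain ⟨q, hq⟩ := (G.mem_pathVerts' s _ hs hv).1
    have hxv := ha x hx v hvX' (G.reaches_trans' hxy ⟨q, hq⟩)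
    subst hxv
    obtain ⟨q', hq'⟩ := hxy
    have o1 := G.ord_le' ord ho q _ hq
    have o2 := G.ord_le' ord ho q' _ hq'
    exact he (hinj (le_antisymm o1 o2) ▸ hvX')

end MGraph

/-- **Root weight extension via total path weights.**
For an edge weight function `ς` with total path weight function `σ` and a root
weight function extended to `τ : V → R`: for every horizontal subset `X` of `G`
and every `y ∈ Desc(X)` we have `τ(y) = Σ_{x ∈ X} τ(x)·σ(x,y)`;
in particular `τ(y) = Σ_{r ∈ Rt(G)} τ(r)·σ(r,y)` for every `y ∈ V`. -/
theorem rootExtension_eq_sum_total_weights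
    {V E R : Type*} [Finite V] [Finite E] [CommRing R]
    (G : MGraph V E) (hG : G.IsDAMG)
    (ς : E → R) (σ : V → V → R) (hσ : G.IsTotalWeight ς σ)
    (τ : V → R) (hτ : G.IsRootExtension ς τ)
    (X : Set V) (hX : G.Horizontal X) :
    (∀ y : V, (∃ x ∈ X, y ∈ G.desc x) → τ y = ∑ᶠ x ∈ X, τ x * σ x y) ∧
    (∀ y : V, τ y = ∑ᶠ r ∈ G.roots, τ r * σ r y) := by
  have ha := G.horiz_a' hG X hX
  have hb := G.horiz_b' hG X hX
  obtain ⟨ord, hinj, ho⟩ := hG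
  refine ⟨fun y hy => G.core' ord ho ς σ hσ τ hτ X ha hb _ y (Nat.lt_succ_self _) hy,
    fun y => G.core' ord ho ς σ hσ τ hτ G.roots ?_ ?_ _ y (Nat.lt_succ_self _)
      (G.exists_root' ord ho _ y (Nat.lt_succ_self _))⟩
  · rintro x _ x' hx' ⟨p, hp⟩
    have hend := G.end_mem_pathVerts' p x hp
    rw [MGraph.pathVerts, List.mem_cons, List.mem_map] at hend
    rcases hend with h | ⟨e, _, he⟩
    · exact h.symm
    · have : G.tl e ∈ G.pa x' := ⟨e, rfl, he⟩
      rw [show G.pa x' = ∅ from hx'] at this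
      exact this.elim
  · intro e _ _
    exact G.exists_root' ord ho _ _ (Nat.lt_succ_self _)
end

section
/- Let G = (V,E) be a DAMG, R a commutative ring, ς : E → R an edge weight function with total path weight function σ, and τ : Rt(G) → R a root weight function extended to τ : V → R; assume τ(y) is a unit of R for every y ∈ V. Define the induced projection weight function q : E → R by q(e) := τ(t(e)) · τ(h(e))⁻¹ · ς(e), and let s be the total path weight function of q. Then for all x, y ∈ V: s(x|y) = τ(x) · τ(y)⁻¹ · σ(x,y). -/
open scoped Classical

/-- **Total path weights of the induced projection weights.**
Let `ς` be an edge weight function with total path weight function `σ`, and let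
`τ : V → R` be the extension of a root weight function, all of whose values are
units. Define the induced projection weight function `q(e) := τ(t(e))·τ(h(e))⁻¹·ς(e)`
and let `s` be its total path weight function. Then
`s(x|y) = τ(x)·τ(y)⁻¹·σ(x,y)` for all `x, y ∈ V`. -/
theorem induced_projection_total_weights
    {V E R : Type*} [Finite V] [Finite E] [CommRing R]
    (G : MGraph V E) (hG : G.IsDAMG)
    (ς : E → R) (σ : V → V → R) (hσ : G.IsTotalWeight ς σ)
    (τ : V → R) (hτ : G.IsRootExtension ς τ) (hunit : ∀ y : V, IsUnit (τ y))
    (s : V → V → R)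
    (hs : G.IsTotalWeight (fun e => τ (G.tl e) * Ring.inverse (τ (G.hd e)) * ς e) s) :
    ∀ x y : V, s x y = τ x * Ring.inverse (τ y) * σ x y := by
  obtain ⟨ord, -, hord⟩ := hG
  obtain ⟨hs0, hs1, hs2⟩ := hs
  obtain ⟨hσ0, hσ1, hσ2⟩ := hσ
  have hpw : ∀ z y : V, G.pw (fun e => τ (G.tl e) * Ring.inverse (τ (G.hd e)) * ς e) z y
      = τ z * Ring.inverse (τ y) * G.pw ς z y := by
    intro z y
    unfold MGraph.pw
    rw [mul_finsum_mem' _ _ (Set.toFinite _)]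
    refine finsum_mem_congr rfl ?_
    rintro e ⟨h1, h2⟩
    simp only [h1, h2]
  intro x y
  induction hn : ord y using Nat.strong_induction_on generalizing y with
  | _ n ih =>
    by_cases hd : y ∈ G.desc x
    · by_cases hyx : y = x
      · subst hyx
        rw [hs1, hσ1, Ring.mul_inverse_cancel _ (hunit y), mul_one]
      · rw [hs2 x y hd hyx, hσ2 x y hd hyx, mul_finsum_mem' _ _ (Set.toFinite _)]
        refine finsum_mem_congr rfl ?_
        rintro z ⟨e, h1, h2⟩
        have hlt : ord z < n := by
          rw [← hn, ← h1, ← h2]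
          exact hord e
        rw [ih _ hlt z rfl, hpw]
        have hz := Ring.inverse_mul_cancel _ (hunit z)
        linear_combination (τ x * σ x z * Ring.inverse (τ y) * G.pw ς z y) * hz
    · rw [hs0 x y hd, hσ0 x y hd, mul_zero]
end

section
/- Let G = (V,E) be a DAMG, z ∈ V, and G^{∖z} the projection of G onto V∖{z}. Then for all x, y ∈ V∖{z} there is a bijection between the set of directed paths from x to y in G and the set of directed paths from x to y in G^{∖z} (replacing each occurrence of a consecutive pair of edges u→z→t by the corresponding new edge u→t). Consequently, for all x, y ∈ V∖{z}: Anc^{G^{∖z}}(y) = Anc^G(y)∖{z}, Desc^{G^{∖z}}(x) = Desc^G(x)∖{z}, and π^{G^{∖z}}(x,y) = π^G(x,y). -/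
open scoped Classical

namespace MGraph

/-- the list of original edges underlying an edge of the projection -/
def expandEdge {V E : Type*} (G : MGraph V E) (z : V) : G.proj1E z → List E
  | Sum.inl e => [e.1]
  | Sum.inr p => [p.1.1, p.1.2]

/-- replace every new edge of the projection by the pair of edges it stands for -/
def expand {V E : Type*} (G : MGraph V E) (z : V) : List (G.proj1E z) → List E
  | [] => []
  | a :: l => G.expandEdge z a ++ G.expand z l

theorem expand_injective {V E : Type*} (G : MGraph V E) (z : V) :
    Function.Injective (G.expand z) := by
  intro l₁
  induction l₁ with
  | nil =>
    intro l₂ h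
    cases l₂ with
    | nil => rfl
    | cons a l => rcases a with e | p <;> simp [expand, expandEdge] at h
  | cons a l ih =>
    intro l₂ h
    cases l₂ with
    | nil => rcases a with e | p <;> simp [expand, expandEdge] at h
    | cons b m =>
      rcases a with ⟨e, he⟩ | ⟨⟨p, q⟩, hp⟩ <;> rcases b with ⟨e', he'⟩ | ⟨⟨p', q'⟩, hp'⟩ <;>
        simp only [expand, expandEdge, List.cons_append, List.nil_append, List.cons.injEq] at h
      · obtain ⟨rfl, h⟩ := h
        rw [ih h]
      · obtain ⟨rfl, h⟩ := h
        exact absurd hp'.1 he.2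
      · obtain ⟨rfl, h⟩ := h
        exact absurd hp.1 he'.2
      · obtain ⟨rfl, rfl, h⟩ := h
        rw [ih h]

theorem expand_isPath {V E : Type*} (G : MGraph V E) (z : V) (y : {x : V // x ≠ z})
    (l : List (G.proj1E z)) : ∀ x : {x : V // x ≠ z},
    (G.proj1 z).IsPath x y l → G.IsPath x.1 y.1 (G.expand z l) := by
  induction l with
  | nil => intro x h; exact congrArg Subtype.val h
  | cons a l ih =>
    rintro x ⟨h1, h2⟩
    have h3 := ih _ h2
    subst h1
    rcases a with ⟨e, he⟩ | ⟨⟨p, q⟩, hp⟩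
    · exact ⟨rfl, h3⟩
    · exact ⟨rfl, hp.2.1.trans hp.1.symm, h3⟩

theorem expand_surj {V E : Type*} (G : MGraph V E) (hG : G.IsDAMG) (z : V) (y : V) (hy : y ≠ z)
    (n : ℕ) : ∀ (l : List E), l.length ≤ n → ∀ (x : V) (hx : x ≠ z), G.IsPath x y l →
    ∃ m, (G.proj1 z).IsPath ⟨x, hx⟩ ⟨y, hy⟩ m ∧ G.expand z m = l := by
  obtain ⟨ord, -, hord⟩ := hG
  induction n with
  | zero =>
    intro l hl x hx h
    obtain rfl : l = [] := List.length_eq_zero_iff.mp (by omega)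
    exact ⟨[], Subtype.ext h, rfl⟩
  | succ n ih =>
    intro l hl x hx h
    match l, hl, h with
    | [], _, h => exact ⟨[], Subtype.ext h, rfl⟩
    | e :: es, hl, ⟨h1, h2⟩ =>
      subst h1
      by_cases hz : G.hd e = z
      · match es, hl, h2 with
        | [], _, h2 => exact absurd (Eq.trans (Eq.symm h2) hz) hy
        | f :: fs, hl, ⟨h3, h4⟩ =>
          have hf : G.hd f ≠ z := by
            intro hf
            have := hord f
            rw [h3, hz, hf] at this
            exact lt_irrefl _ this
          obtain ⟨m, hm, hm'⟩ := ih fs (by simp at hl; omega) _ hf h4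
          refine ⟨Sum.inr ⟨(e, f), hz, h3.trans hz, hx, hf⟩ :: m, ⟨rfl, hm⟩, ?_⟩
          simp [expand, expandEdge, hm']
      · obtain ⟨m, hm, hm'⟩ := ih es (by simp at hl; omega) _ hz h2
        refine ⟨Sum.inl ⟨e, hx, hz⟩ :: m, ⟨rfl, hm⟩, ?_⟩
        simp [expand, expandEdge, hm']

end MGraph

/-- **Directed paths and ancestral relationships are stable under projection.**
For a DAMG `G`, `z ∈ V` and `x, y ∈ V∖{z}`: the directed paths from `x` to `y`
in `G` are in bijection with those in `G^{∖z}`, hence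
`Anc^{G^{∖z}}(y) = Anc^G(y)∖{z}`, `Desc^{G^{∖z}}(x) = Desc^G(x)∖{z}` and
`π^{G^{∖z}}(x,y) = π^G(x,y)`. -/
theorem proj1_paths_anc_desc
    {V E : Type*} [Finite V] [Finite E]
    (G : MGraph V E) (hG : G.IsDAMG) (z : V) :
    (∀ (x y : V) (hx : x ≠ z) (hy : y ≠ z),
      Nonempty ({l : List E // G.IsPath x y l} ≃
        {l : List (G.proj1E z) // (G.proj1 z).IsPath ⟨x, hx⟩ ⟨y, hy⟩ l})) ∧
    (∀ (y : V) (hy : y ≠ z) (x : V) (hx : x ≠ z),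
      (⟨x, hx⟩ : {x : V // x ≠ z}) ∈ (G.proj1 z).anc ⟨y, hy⟩ ↔ x ∈ G.anc y) ∧
    (∀ (x : V) (hx : x ≠ z) (y : V) (hy : y ≠ z),
      (⟨y, hy⟩ : {x : V // x ≠ z}) ∈ (G.proj1 z).desc ⟨x, hx⟩ ↔ y ∈ G.desc x) ∧
    (∀ (x y : V) (hx : x ≠ z) (hy : y ≠ z),
      (G.proj1 z).nPaths ⟨x, hx⟩ ⟨y, hy⟩ = G.nPaths x y) := by
  have key : ∀ (x y : V) (hx : x ≠ z) (hy : y ≠ z),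
      Nonempty ({l : List E // G.IsPath x y l} ≃
        {l : List (G.proj1E z) // (G.proj1 z).IsPath ⟨x, hx⟩ ⟨y, hy⟩ l}) := by
    intro x y hx hy
    refine ⟨(Equiv.ofBijective (fun l => ⟨G.expand z l.1,
      G.expand_isPath z ⟨y, hy⟩ l.1 ⟨x, hx⟩ l.2⟩) ⟨?_, ?_⟩).symm⟩
    · intro a b h
      exact Subtype.ext (G.expand_injective z (congrArg Subtype.val h))
    · rintro ⟨l, hl⟩
      obtain ⟨m, hm, hm'⟩ := G.expand_surj hG z y hy l.length l le_rfl x hx hl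
      exact ⟨⟨m, hm⟩, Subtype.ext hm'⟩
  have reach : ∀ (x y : V) (hx : x ≠ z) (hy : y ≠ z),
      (G.proj1 z).Reaches ⟨x, hx⟩ ⟨y, hy⟩ ↔ G.Reaches x y := by
    intro x y hx hy
    obtain ⟨φ⟩ := key x y hx hy
    exact ⟨fun ⟨l, hl⟩ => ⟨_, (φ.symm ⟨l, hl⟩).2⟩, fun ⟨l, hl⟩ => ⟨_, (φ ⟨l, hl⟩).2⟩⟩
  refine ⟨key, fun y hy x hx => reach x y hx hy, fun x hx y hy => reach x y hx hy, ?_⟩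
  intro x y hx hy
  obtain ⟨φ⟩ := key x y hx hy
  exact (Nat.card_congr φ).symm
end

section
/- Let G = (V,E) be a DAMG, R a commutative ring, q : E → R a normalized weight function, and z ∈ V such that z ∉ Rt(G)∖Lf(G) (i.e. z is not a root, or z is simultaneously a root and a leaf). Then the projected weight function q^{∖z} is a normalized weight function on the projected DAMG G^{∖z}. -/
open scoped Classical

namespace MGraph

/-- total incoming weight as a finite sum over edges -/
lemma sum_pw_eq {V E R : Type*} [Finite V] [Fintype E] [CommRing R]
    (G : MGraph V E) (q : E → R) (y : V) :
    (∑ᶠ x : V, G.pw q x y) = ∑ e : E, if G.hd e = y then q e else 0 := by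
  haveI := Fintype.ofFinite V
  rw [finsum_eq_sum_of_fintype]
  have h : ∀ x : V, G.pw q x y
      = ∑ e : E, if G.tl e = x then (if G.hd e = y then q e else 0) else 0 := by
    intro x
    unfold pw
    rw [finsum_mem_def, finsum_eq_sum_of_fintype]
    refine Finset.sum_congr rfl fun e _ => ?_
    rw [Set.indicator_apply]
    simp only [edges, Set.mem_setOf_eq]
    split_ifs <;> simp_all
  simp only [h]
  rw [Finset.sum_comm]
  simp

end MGraph

theorem proj1_normalized
    {V E R : Type*} [Finite V] [Finite E] [CommRing R]
    (G : MGraph V E) (hG : G.IsDAMG)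
    (q : E → R) (hq : G.Normalized q)
    (z : V) (hz : z ∉ G.roots \ G.leaves) :
    (G.proj1 z).Normalized (G.proj1Q z q) := by
  obtain ⟨ord, -, hord⟩ := hG
  haveI := Fintype.ofFinite E
  have hloop : ∀ e, G.tl e ≠ G.hd e := fun e h => by
    have := hord e
    rw [h] at this
    exact lt_irrefl _ this
  have hnr : ∀ e, G.hd e ∉ G.roots := fun e h => by
    have h' : G.pa (G.hd e) = ∅ := h
    have : G.tl e ∈ G.pa (G.hd e) := ⟨e, rfl, rfl⟩
    rw [h'] at this
    exact this
  intro y hy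
  obtain ⟨y, hyz⟩ := y
  have hyG : y ∉ G.roots := by
    have : ((G.proj1 z).pa ⟨y, hyz⟩).Nonempty := by
      rw [Set.nonempty_iff_ne_empty]; exact hy
    obtain ⟨x, e, -, he⟩ := this
    rcases e with e | p
    · have : G.hd e.1 = y := congrArg Subtype.val he
      exact this ▸ hnr _
    · have : G.hd p.1.2 = y := congrArg Subtype.val he
      exact this ▸ hnr _
  have h1 := hq y hyG
  rw [MGraph.sum_pw_eq] at h1
  letI : Fintype (G.proj1E z) :=
    (inferInstance : Fintype ({e : E // G.tl e ≠ z ∧ G.hd e ≠ z} ⊕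
  {p : E × E // G.hd p.1 = z ∧ G.tl p.2 = z ∧ G.tl p.1 ≠ z ∧ G.hd p.2 ≠ z}))
  rw [MGraph.sum_pw_eq]
  have hsplit : (∑ e : G.proj1E z, if (G.proj1 z).hd e = ⟨y, hyz⟩ then G.proj1Q z q e else 0)
      = (∑ e : {e : E // G.tl e ≠ z ∧ G.hd e ≠ z}, if G.hd e.1 = y then q e.1 else 0)
      + ∑ p : {p : E × E // G.hd p.1 = z ∧ G.tl p.2 = z ∧ G.tl p.1 ≠ z ∧ G.hd p.2 ≠ z},
          if G.hd p.1.2 = y then q p.1.1 * q p.1.2 else 0 := by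
    refine (Fintype.sum_sum_type _).trans ?_
    congr 1
    · refine Finset.sum_congr rfl fun e _ => ?_
      exact if_congr Subtype.ext_iff rfl rfl
    · refine Finset.sum_congr rfl fun e _ => ?_
      exact if_congr Subtype.ext_iff rfl rfl
  have hA : (∑ e : {e : E // G.tl e ≠ z ∧ G.hd e ≠ z}, if G.hd e.1 = y then q e.1 else 0)
      = ∑ e : E, if G.tl e ≠ z ∧ G.hd e = y then q e else 0 := by
    rw [← Finset.sum_subtype (Finset.univ.filter fun e => G.tl e ≠ z ∧ G.hd e ≠ z) (by simp)
      (fun e => if G.hd e = y then q e else 0), Finset.sum_filter]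
    refine Finset.sum_congr rfl fun e _ => ?_
    grind
  have hB : (∑ p : {p : E × E // G.hd p.1 = z ∧ G.tl p.2 = z ∧ G.tl p.1 ≠ z ∧ G.hd p.2 ≠ z},
          if G.hd p.1.2 = y then q p.1.1 * q p.1.2 else 0)
      = (∑ e : E, if G.hd e = z then q e else 0) *
        ∑ e : E, if G.tl e = z ∧ G.hd e = y then q e else 0 := by
    rw [← Finset.sum_subtype (Finset.univ.filter fun p : E × E =>
        G.hd p.1 = z ∧ G.tl p.2 = z ∧ G.tl p.1 ≠ z ∧ G.hd p.2 ≠ z) (by simp)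
      (fun p => if G.hd p.2 = y then q p.1 * q p.2 else 0), Finset.sum_filter,
      Finset.sum_mul_sum, Fintype.sum_prod_type]
    refine Finset.sum_congr rfl fun e _ => Finset.sum_congr rfl fun e' _ => ?_
    have := hloop e
    by_cases a : G.hd e = z <;> by_cases b : G.tl e' = z <;> by_cases c : G.hd e' = y <;>
      simp_all
  have hC : (∑ e : E, if G.hd e = z then q e else 0) *
        (∑ e : E, if G.tl e = z ∧ G.hd e = y then q e else 0)
      = ∑ e : E, if G.tl e = z ∧ G.hd e = y then q e else 0 := by
    by_cases hzr : z ∈ G.roots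
    · have hl : z ∈ G.leaves := by
        by_contra h
        exact hz ⟨hzr, h⟩
      have : (∑ e : E, if G.tl e = z ∧ G.hd e = y then q e else 0) = 0 :=
        Finset.sum_eq_zero fun e _ => if_neg fun h => hl e h.1
      rw [this, mul_zero]
    · have := hq z hzr
      rw [MGraph.sum_pw_eq] at this
      rw [this, one_mul]
  have hfin : (∑ e : G.proj1E z, if (G.proj1 z).hd e = ⟨y, hyz⟩ then G.proj1Q z q e else 0)
      = 1 := by
    rw [hsplit, hA, hB, hC, ← Finset.sum_add_distrib, ← h1]
    refine Finset.sum_congr rfl fun e _ => ?_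
    by_cases h : G.tl e = z <;> simp [h]
  rw [← hfin]
  refine Finset.sum_congr rfl fun e _ => ?_
  congr
end

section
/- Let G = (V,E) be a DAMG, R a commutative ring, q : E → R a normalized weight function, A an R-module, v : V → A a value function with Möbius transform w = v', and z ∈ V a fixed element such that z ∉ Rt(G) or w(z) = 0. Then Σ_{x ∈ V∖{z}} w^{∖z}(x) = Σ_{x ∈ V} w(x). -/
open scoped Classical

/-- **Efficiency is stable under projection.**
Let `q` be a normalized weight function on the DAMG `G`, `w` the Möbius transform
of `v`, and `z ∈ V` with `z ∉ Rt(G)` or `w(z) = 0` (weak element). Then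
`Σ_{x ∈ V∖{z}} w^{∖z}(x) = Σ_{x ∈ V} w(x)`, where `w^{∖z}(x) = w(x) + q(x|z)·w(z)`. -/
theorem proj1_efficiency
    {V E R A : Type*} [Finite V] [Finite E] [CommRing R] [AddCommGroup A] [Module R A]
    (G : MGraph V E) (hG : G.IsDAMG)
    (q : E → R) (hq : G.Normalized q)
    (v w : V → A) (hw : G.IsMoebiusTransform v w)
    (z : V) (hz : z ∉ G.roots ∨ w z = 0) :
    (∑ᶠ x ∈ {x : V | x ≠ z}, (w x + G.pw q x z • w z)) = ∑ᶠ x : V, w x := by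
  have := Fintype.ofFinite V
  obtain ⟨ord, -, hord⟩ := hG
  have hzz : G.pw q z z = 0 := by
    have he : G.edges z z = ∅ := by
      ext e
      simp only [MGraph.edges, Set.mem_setOf_eq, Set.mem_empty_iff_false, iff_false]
      rintro ⟨h1, h2⟩
      have h := hord e
      rw [h1, h2] at h
      exact lt_irrefl _ h
    simp [MGraph.pw, he]
  have hset : {x : V | x ≠ z} = ((Finset.univ.erase z : Finset V) : Set V) := by
    ext x
    simp
  have key : (∑ x : V, G.pw q x z) • w z = w z := by
    rcases hz with h | h
    · have h1 := hq z h
      rw [finsum_eq_sum_of_fintype] at h1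
      rw [h1, one_smul]
    · rw [h, smul_zero]
  rw [hset, finsum_mem_coe_finset, finsum_eq_sum_of_fintype, Finset.sum_add_distrib,
    ← Finset.sum_smul]
  have e1 := Finset.add_sum_erase Finset.univ w (Finset.mem_univ z)
  have e2 := Finset.add_sum_erase Finset.univ (fun x => G.pw q x z) (Finset.mem_univ z)
  simp only [hzz, zero_add] at e2
  rw [e2, key, ← e1, add_comm]
end

section
/- Let G = (V,E) be a DAMG, R a commutative ring, q : E → R a weight function, A an R-module, v : V → A a value function with Möbius transform w = v', and z ∈ V. If y ∈ V∖{z} is a null element for (G,v), then y is a null element for (G^{∖z}, v^{∖z}); that is, the Möbius transform of v^{∖z} with respect to G^{∖z} (which equals w^{∖z}) vanishes on all of Desc^{G^{∖z}}(y). -/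
open scoped Classical

theorem MGraph.IsPath.append' {V E : Type*} (G : MGraph V E) {x y u : V} {l m : List E}
    (h : G.IsPath x y l) (h2 : G.IsPath y u m) : G.IsPath x u (l ++ m) := by
  induction l generalizing x with
  | nil =>
    have h' : x = y := h
    subst h'
    exact h2
  | cons e es ih => exact ⟨h.1, ih h.2⟩

theorem MGraph.reaches_of_proj1 {V E : Type*} (G : MGraph V E) (z : V)
    (l : List (G.proj1E z)) :
    ∀ x y : {x : V // x ≠ z}, (G.proj1 z).IsPath x y l → G.Reaches x.1 y.1 := by
  induction l with
  | nil =>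
    intro x y h
    exact ⟨[], congrArg Subtype.val (show x = y from h)⟩
  | cons e es ih =>
    intro x y h
    obtain ⟨h1, h2⟩ := h
    obtain ⟨m, hm⟩ := ih _ _ h2
    subst h1
    rcases e with e | p
    · exact ⟨e.1 :: m, rfl, hm⟩
    · exact ⟨p.1.1 :: p.1.2 :: m, rfl, p.2.2.1.trans p.2.1.symm, hm⟩

/-- **Null elements are stable under projection.**
Let `q` be a weight function on the DAMG `G`, `w` the Möbius transform of `v`,
`z ∈ V`, and `y ∈ V∖{z}` a null element for `(G,v)` (i.e. `w` vanishes on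
`Desc^G(y)`). Then `y` is a null element for `(G^{∖z}, v^{∖z})`: the Möbius
transform of `v^{∖z}` w.r.t. `G^{∖z}` — which is the projection
`w^{∖z}(x) = w(x) + q(x|z)·w(z)` — vanishes on all of `Desc^{G^{∖z}}(y)`. -/
theorem proj1_null_element
    {V E R A : Type*} [Finite V] [Finite E] [CommRing R] [AddCommGroup A] [Module R A]
    (G : MGraph V E) (hG : G.IsDAMG)
    (q : E → R)
    (v w : V → A) (hw : G.IsMoebiusTransform v w)
    (z y : V) (hy : y ≠ z)
    (hnull : ∀ x ∈ G.desc y, w x = 0) :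
    ∀ x : {x : V // x ≠ z}, x ∈ (G.proj1 z).desc ⟨y, hy⟩ →
      w x.1 + G.pw q x.1 z • w z = 0 := by
  rintro x ⟨l, hl⟩
  obtain ⟨m, hm⟩ := MGraph.reaches_of_proj1 G z l _ _ hl
  rw [hnull x.1 ⟨m, hm⟩, zero_add]
  by_cases hE : ∃ e, e ∈ G.edges x.1 z
  · obtain ⟨e, he1, he2⟩ := hE
    have hz : w z = 0 :=
      hnull z ⟨m ++ [e], MGraph.IsPath.append' G hm ⟨he1, he2⟩⟩
    rw [hz, smul_zero]
  · have h0 : G.edges x.1 z = ∅ := Set.eq_empty_iff_forall_notMem.mpr (not_exists.mp hE)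
    rw [MGraph.pw, h0, finsum_mem_empty, zero_smul]
end

section
/- Let G = (V,E) be a DAMG, R a commutative ring, q : E → R a weight function, A an R-module, w : V → A a function, and z, u ∈ V with z ≠ u. Then the two iterated projections agree: (G^{∖z})^{∖u} = (G^{∖u})^{∖z} (under the canonical identification of edge sets, using acyclicity of G), (q^{∖z})^{∖u} = (q^{∖u})^{∖z}, and (w^{∖z})^{∖u} = (w^{∖u})^{∖z} as functions on V∖{z,u}. -/
open scoped Classical

namespace MGraph

/-- acyclicity excludes a pair of opposite edges -/
theorem IsDAMG.no_two_cycle {V E : Type*} {G : MGraph V E} (hG : G.IsDAMG) {e f : E}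
    (h1 : G.hd e = G.tl f) (h2 : G.hd f = G.tl e) : False := by
  obtain ⟨ord, -, h⟩ := hG
  have a := h e
  have b := h f
  rw [h1] at a
  rw [h2] at b
  omega

/-- the canonical map between edge sets of the iterated projections -/
def swapEdge {V E : Type*} (G : MGraph V E) (hG : G.IsDAMG) (z u : V) (huz : u ≠ z) (hzu : z ≠ u) :
    (G.proj1 z).proj1E ⟨u, huz⟩ → (G.proj1 u).proj1E ⟨z, hzu⟩
  | Sum.inl ⟨Sum.inl e, h⟩ =>
      Sum.inl ⟨Sum.inl ⟨e.1, fun k => h.1 (Subtype.ext k), fun k => h.2 (Subtype.ext k)⟩,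
        fun k => e.2.1 (congrArg Subtype.val k), fun k => e.2.2 (congrArg Subtype.val k)⟩
  | Sum.inl ⟨Sum.inr p, h⟩ =>
      Sum.inr ⟨(Sum.inl ⟨p.1.1, fun k => h.1 (Subtype.ext k),
            fun k => hzu (p.2.1.symm.trans k)⟩,
          Sum.inl ⟨p.1.2, fun k => hzu (p.2.2.1.symm.trans k), fun k => h.2 (Subtype.ext k)⟩),
        Subtype.ext p.2.1, Subtype.ext p.2.2.1,
        fun k => p.2.2.2.1 (congrArg Subtype.val k), fun k => p.2.2.2.2 (congrArg Subtype.val k)⟩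
  | Sum.inr ⟨(Sum.inl e, Sum.inl f), h⟩ =>
      Sum.inl ⟨Sum.inr ⟨(e.1, f.1), congrArg Subtype.val h.1, congrArg Subtype.val h.2.1,
          fun k => h.2.2.1 (Subtype.ext k), fun k => h.2.2.2 (Subtype.ext k)⟩,
        fun k => e.2.1 (congrArg Subtype.val k), fun k => f.2.2 (congrArg Subtype.val k)⟩
  | Sum.inr ⟨(Sum.inl e, Sum.inr p), h⟩ =>
      Sum.inr ⟨(Sum.inr ⟨(e.1, p.1.1), congrArg Subtype.val h.1, congrArg Subtype.val h.2.1,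
            fun k => h.2.2.1 (Subtype.ext k), fun k => hzu (p.2.1.symm.trans k)⟩,
          Sum.inl ⟨p.1.2, fun k => hzu (p.2.2.1.symm.trans k),
            fun k => h.2.2.2 (Subtype.ext k)⟩),
        Subtype.ext p.2.1, Subtype.ext p.2.2.1,
        fun k => e.2.1 (congrArg Subtype.val k), fun k => p.2.2.2.2 (congrArg Subtype.val k)⟩
  | Sum.inr ⟨(Sum.inr p, Sum.inl e), h⟩ =>
      Sum.inr ⟨(Sum.inl ⟨p.1.1, fun k => h.2.2.1 (Subtype.ext k),
            fun k => hzu (p.2.1.symm.trans k)⟩,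
          Sum.inr ⟨(p.1.2, e.1), congrArg Subtype.val h.1, congrArg Subtype.val h.2.1,
            fun k => hzu (p.2.2.1.symm.trans k), fun k => h.2.2.2 (Subtype.ext k)⟩),
        Subtype.ext p.2.1, Subtype.ext p.2.2.1,
        fun k => p.2.2.2.1 (congrArg Subtype.val k), fun k => e.2.2 (congrArg Subtype.val k)⟩
  | Sum.inr ⟨(Sum.inr p, Sum.inr r), h⟩ =>
      (hG.no_two_cycle (e := p.1.2) (f := r.1.1)
        ((congrArg Subtype.val h.1).trans (congrArg Subtype.val h.2.1).symm)
        (r.2.1.trans p.2.2.1.symm)).elim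

theorem no_zz {V E : Type*} {G : MGraph V E} (hG : G.IsDAMG) {z u : V} {huz : u ≠ z}
    {p r} (h1 : (G.proj1 z).hd (Sum.inr p) = ⟨u, huz⟩)
    (h2 : (G.proj1 z).tl (Sum.inr r) = ⟨u, huz⟩) : False :=
  hG.no_two_cycle (e := p.1.2) (f := r.1.1)
        ((congrArg Subtype.val h1).trans (congrArg Subtype.val h2).symm)
        (r.2.1.trans p.2.2.1.symm)

theorem swapEdge_swapEdge {V E : Type*} (G : MGraph V E) (hG : G.IsDAMG) (z u : V)
    (huz : u ≠ z) (hzu : z ≠ u) (e) :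
    swapEdge G hG u z hzu huz (swapEdge G hG z u huz hzu e) = e := by
  rcases e with ⟨e | p, h⟩ | ⟨⟨e | p, f | r⟩, h⟩
  · rfl
  · rfl
  · rfl
  · rfl
  · rfl
  · exact (no_zz hG h.1 h.2.1).elim

theorem pw_eq_sum {V E R : Type*} [Fintype E] [CommRing R] (G : MGraph V E) (q : E → R) (x y : V) :
    G.pw q x y = ∑ e : E, if G.tl e = x ∧ G.hd e = y then q e else 0 := by
  unfold pw
  rw [finsum_mem_def, finsum_eq_sum_of_fintype]
  refine Finset.sum_congr rfl fun e _ => ?_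
  simp only [Set.indicator, edges, Set.mem_ofPred_eq]
  congr

theorem sum_sub {ι R : Type*} [Fintype ι] [CommRing R] (p : ι → Prop) [Fintype {i // p i}]
    (f : ι → R) :
    ∑ i : {i // p i}, f i.1 = ∑ i, if p i then f i else 0 := by
  rw [← Finset.sum_filter]
  exact (Finset.sum_subtype _ (by simp) f).symm

theorem pw_proj1 {V E R : Type*} [Finite E] [CommRing R] (G : MGraph V E) (q : E → R)
    (z x y : V) (hx : x ≠ z) (hy : y ≠ z) :
    (G.proj1 z).pw (G.proj1Q z q) ⟨x, hx⟩ ⟨y, hy⟩ = G.pw q x y + G.pw q x z * G.pw q z y := by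
  have := Fintype.ofFinite E
  letI : Fintype (G.proj1E z) := (inferInstance : Fintype
    ({e : E // G.tl e ≠ z ∧ G.hd e ≠ z} ⊕
    {p : E × E // G.hd p.1 = z ∧ G.tl p.2 = z ∧ G.tl p.1 ≠ z ∧ G.hd p.2 ≠ z}))
  rw [pw_eq_sum, pw_eq_sum, pw_eq_sum, pw_eq_sum]
  refine (Fintype.sum_sum_type (M := R)
    (α₁ := {e : E // G.tl e ≠ z ∧ G.hd e ≠ z})
    (α₂ := {p : E × E // G.hd p.1 = z ∧ G.tl p.2 = z ∧ G.tl p.1 ≠ z ∧ G.hd p.2 ≠ z}) _).trans ?_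
  congr 1
  · have := sum_sub (fun e : E => G.tl e ≠ z ∧ G.hd e ≠ z)
      (fun e => if G.tl e = x ∧ G.hd e = y then q e else 0)
    refine (Eq.trans ?_ this).trans ?_
    · refine Finset.sum_congr rfl fun e _ => ?_
      simp [proj1, proj1Q]
    · refine Finset.sum_congr rfl fun e _ => ?_
      grind
  · have := sum_sub (fun p : E × E => G.hd p.1 = z ∧ G.tl p.2 = z ∧ G.tl p.1 ≠ z ∧ G.hd p.2 ≠ z)
      (fun p => if G.tl p.1 = x ∧ G.hd p.2 = y then q p.1 * q p.2 else 0)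
    refine (Eq.trans ?_ this).trans ?_
    · refine Finset.sum_congr rfl fun e _ => ?_
      simp [proj1, proj1Q]
    · rw [Finset.sum_mul_sum, Fintype.sum_prod_type]
      refine Finset.sum_congr rfl fun e _ => Finset.sum_congr rfl fun f _ => ?_
      simp only []
      split_ifs <;> grind

theorem pw_mul_pw_eq_zero {V E R : Type*} [CommRing R] (G : MGraph V E) (hG : G.IsDAMG)
    (q : E → R) (z u : V) : G.pw q z u * G.pw q u z = 0 := by
  by_cases h : ∃ e, e ∈ G.edges z u
  · obtain ⟨e, he⟩ := h
    have : G.edges u z = ∅ := by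
      ext f
      simp only [Set.mem_empty_iff_false, iff_false]
      intro hf
      exact hG.no_two_cycle (he.2.trans hf.1.symm) (hf.2.trans he.1.symm)
    simp [pw, this]
  · have : G.edges z u = ∅ := Set.eq_empty_of_forall_notMem fun e he => h ⟨e, he⟩
    simp [pw, this]

end MGraph

/-- **Projections commute.**
For a DAMG `G`, a weight function `q`, a synergy function `w`, and distinct
`z, u ∈ V`: the iterated projections `(G^{∖z})^{∖u}` and `(G^{∖u})^{∖z}` agree
under the canonical identification (using acyclicity of `G`): there is a
bijection of their edge sets preserving tails, heads (via the canonical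
identification of vertex sets) and the iterated projected weights
`(q^{∖z})^{∖u} = (q^{∖u})^{∖z}`; moreover `(w^{∖z})^{∖u} = (w^{∖u})^{∖z}` as
functions on `V∖{z,u}`. -/
theorem projections_commute
    {V E R A : Type*} [Finite V] [Finite E] [CommRing R] [AddCommGroup A] [Module R A]
    (G : MGraph V E) (hG : G.IsDAMG)
    (q : E → R) (w : V → A) (z u : V) (hzu : z ≠ u) :
    (∃ φ : ((G.proj1 z).proj1E ⟨u, Ne.symm hzu⟩) ≃ ((G.proj1 u).proj1E ⟨z, hzu⟩),
      (∀ e, ((G.proj1 u).proj1 ⟨z, hzu⟩).tl (φ e)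
          = MGraph.swapCompl z u hzu (((G.proj1 z).proj1 ⟨u, Ne.symm hzu⟩).tl e)) ∧
      (∀ e, ((G.proj1 u).proj1 ⟨z, hzu⟩).hd (φ e)
          = MGraph.swapCompl z u hzu (((G.proj1 z).proj1 ⟨u, Ne.symm hzu⟩).hd e)) ∧
      (∀ e, (G.proj1 u).proj1Q ⟨z, hzu⟩ ((G.proj1Q u q)) (φ e)
          = (G.proj1 z).proj1Q ⟨u, Ne.symm hzu⟩ ((G.proj1Q z q)) e)) ∧
    (∀ (x : V) (hxz : x ≠ z) (hxu : x ≠ u),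
      MGraph.wProjOne (G.proj1 z) (G.proj1Q z q) (MGraph.wProjOne G q w z)
          ⟨u, Ne.symm hzu⟩ ⟨⟨x, hxz⟩, fun h => hxu (congrArg Subtype.val h)⟩
        = MGraph.wProjOne (G.proj1 u) (G.proj1Q u q) (MGraph.wProjOne G q w u)
          ⟨z, hzu⟩ ⟨⟨x, hxu⟩, fun h => hxz (congrArg Subtype.val h)⟩) := by
  refine ⟨⟨⟨G.swapEdge hG z u hzu.symm hzu, G.swapEdge hG u z hzu hzu.symm,
    G.swapEdge_swapEdge hG z u hzu.symm hzu, G.swapEdge_swapEdge hG u z hzu hzu.symm⟩,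
    ?_, ?_, ?_⟩, ?_⟩
  · rintro (⟨e | p, h⟩ | ⟨⟨e | p, f | r⟩, h⟩)
    iterate 5 rfl
    exact (MGraph.no_zz hG h.1 h.2.1).elim
  · rintro (⟨e | p, h⟩ | ⟨⟨e | p, f | r⟩, h⟩)
    iterate 5 rfl
    exact (MGraph.no_zz hG h.1 h.2.1).elim
  · rintro (⟨e | p, h⟩ | ⟨⟨e | p, f | r⟩, h⟩)
    · rfl
    · rfl
    · rfl
    · exact mul_assoc _ _ _
    · exact (mul_assoc _ _ _).symm
    · exact (MGraph.no_zz hG h.1 h.2.1).elim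
  · intro x hxz hxu
    have h0 := MGraph.pw_mul_pw_eq_zero G hG q z u
    have h1 := MGraph.pw_mul_pw_eq_zero G hG q u z
    simp only [MGraph.wProjOne, MGraph.pw_proj1, smul_add, add_smul, smul_smul, add_mul, mul_assoc, h0, h1,
      mul_zero, zero_smul, add_zero]
    abel
end

section
/- Let G = (V,E) be a DAMG, R a commutative ring, q : E → R a weight function with total path weight function s, A an R-module, v : V → A a value function with Möbius transform w = v'. Let x ∈ V be fixed and S ⊆ V any subset with Desc(x) ∩ S = Desc(x)∖{x}. Then the iterated projection of w onto V∖S satisfies w^{∖S}(x) = Σ_{y ∈ V} s(x|y) · w(y) = Σ_{y ∈ Desc(x)} s(x|y) · w(y). -/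
open scoped Classical

/-- The iterated projection solves a linear fixed point equation. -/
theorem MGraph.projIter_fix {V R A : Type*} [CommRing R] [AddCommGroup A] [Module R A]
    (ord : V → ℕ) (l : List V) : ∀ (Q : V → V → R) (w : V → A),
    (∀ a b, ¬ ord a < ord b → Q a b = 0) → ∀ u,
    (MGraph.projIter l Q w).2 u =
      w u + (l.map fun z => Q u z • (MGraph.projIter l Q w).2 z).sum := by
  induction l with
  | nil => intro Q w _ u; simp [MGraph.projIter]
  | cons z zs ih =>
    intro Q w hQ u
    have hQ' : ∀ a b, ¬ ord a < ord b → MGraph.pwStep Q z a b = 0 := by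
      intro a b hab
      unfold MGraph.pwStep
      rw [hQ a b hab]
      by_cases h : ord a < ord z
      · rw [hQ z b (by omega)]; simp
      · rw [hQ a z h]; simp
    have key := ih (MGraph.pwStep Q z) (MGraph.wStep Q w z) hQ'
    simp only [MGraph.projIter, List.map_cons, List.sum_cons]
    generalize (MGraph.projIter zs (MGraph.pwStep Q z) (MGraph.wStep Q w z)).2 = f at key ⊢
    have hs : ∀ u, (zs.map fun y => MGraph.pwStep Q z u y • f y).sum =
        (zs.map fun y => Q u y • f y).sum + Q u z • (zs.map fun y => Q z y • f y).sum := by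
      intro u
      rw [List.smul_sum, List.map_map, ← List.sum_map_add]
      congr 2
      funext y
      simp [MGraph.pwStep, add_smul, mul_smul]
    have hzz : Q z z = 0 := hQ z z (lt_irrefl _)
    have hz := key z
    rw [hs, hzz] at hz
    have hu := key u
    rw [hs] at hu
    rw [hz, hu]
    simp only [MGraph.wStep, hzz, zero_smul, add_zero, smul_add]
    abel

theorem MGraph.reaches_snoc {V E : Type*} (G : MGraph V E) (e : E) (l : List E) : ∀ x,
    G.IsPath x (G.tl e) l → G.IsPath x (G.hd e) (l ++ [e]) := by
  induction l with
  | nil => intro x h; exact ⟨h.symm, rfl⟩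
  | cons a l ih => intro x h; exact ⟨h.1, ih _ h.2⟩

theorem MGraph.pw_eq_zero {V E R : Type*} [CommRing R] (G : MGraph V E) (q : E → R) (a b : V)
    (h : ∀ e, ¬ (G.tl e = a ∧ G.hd e = b)) : G.pw q a b = 0 := by
  unfold MGraph.pw
  have : G.edges a b = ∅ := by
    ext e; simpa [MGraph.edges] using h e
  rw [this]; simp

theorem MGraph.ord_le {V E : Type*} (G : MGraph V E) (ord : V → ℕ)
    (ho : ∀ e : E, ord (G.tl e) < ord (G.hd e)) (l : List E) : ∀ x y,
    G.IsPath x y l → ord x ≤ ord y := by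
  induction l with
  | nil => intro x y h; rw [show x = y from h]
  | cons a l ih =>
    intro x y h
    have := ih _ _ h.2
    have := ho a
    rw [h.1] at this
    omega

theorem MGraph.total_rec {V E R : Type*} [Fintype V] [CommRing R]
    (G : MGraph V E) (hG : G.IsDAMG)
    (q : E → R) (s : V → V → R) (hs : G.IsTotalWeight q s) (x z : V) :
    ∑ y, s x y * G.pw q y z = if z = x then 0 else s x z := by
  obtain ⟨ord, _, ho⟩ := hG
  have hzero : (∀ e : E, G.hd e = z → G.tl e ∉ G.desc x) → ∑ y, s x y * G.pw q y z = 0 := by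
    intro h
    apply Finset.sum_eq_zero
    intro y _
    by_cases hy : y ∈ G.desc x
    · rw [G.pw_eq_zero q y z, mul_zero]
      rintro e ⟨h1, h2⟩
      exact h e h2 (h1 ▸ hy)
    · rw [hs.1 x y hy, zero_mul]
  split_ifs with hzx
  · apply hzero
    rintro e he ⟨l, hl⟩
    have h1 := G.ord_le ord ho l _ _ hl
    have h2 := ho e
    rw [he, hzx] at h2
    omega
  · by_cases hz : z ∈ G.desc x
    · rw [hs.2.2 x z hz hzx, ← finsum_eq_sum_of_fintype]
      apply finsum_congr
      intro y
      by_cases hy : y ∈ G.pa z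
      · simp [hy]
      · rw [G.pw_eq_zero q y z]
        · simp
        · intro e he; exact hy ⟨e, he⟩
    · rw [hs.1 x z hz]
      apply hzero
      rintro e rfl ⟨l, hl⟩
      exact hz ⟨_, G.reaches_snoc e l x hl⟩

/-- **Projection of a synergy function via total path weights.**
Let `q` be a weight function on the DAMG `G` with total path weight function `s`,
`w` the Möbius transform of `v`, `x ∈ V` fixed, and `S ⊆ V` any subset with
`Desc(x) ∩ S = Desc(x)∖{x}` (enumerated by the duplicate-free list `l`; the order
of the iterated one-element projections is immaterial). Then
`w^{∖S}(x) = Σ_{y ∈ V} s(x|y)·w(y) = Σ_{y ∈ Desc(x)} s(x|y)·w(y)`. -/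
theorem proj_synergy_total_weights
    {V E R A : Type*} [Finite V] [Finite E] [CommRing R] [AddCommGroup A] [Module R A]
    (G : MGraph V E) (hG : G.IsDAMG)
    (q : E → R) (s : V → V → R) (hs : G.IsTotalWeight q s)
    (v w : V → A) (hw : G.IsMoebiusTransform v w)
    (x : V) (S : Set V) (hS : G.desc x ∩ S = G.desc x \ {x})
    (l : List V) (hnd : l.Nodup) (hmem : ∀ z : V, z ∈ l ↔ z ∈ S) :
    (MGraph.projIter l (G.pw q) w).2 x = (∑ᶠ y : V, s x y • w y) ∧
    (MGraph.projIter l (G.pw q) w).2 x = (∑ᶠ y ∈ G.desc x, s x y • w y) := by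
  have := Fintype.ofFinite V
  have h12 : (∑ᶠ y : V, s x y • w y) = (∑ᶠ y ∈ G.desc x, s x y • w y) := by
    apply finsum_congr
    intro y
    by_cases hy : y ∈ G.desc x
    · simp [hy]
    · simp [hy, hs.1 x y hy]
  rw [← h12, and_self]
  have hrec := G.total_rec hG q s hs x
  obtain ⟨ord, _, ho⟩ := hG
  have key := MGraph.projIter_fix ord l (G.pw q) w (by
    intro a b hab
    apply G.pw_eq_zero
    rintro e ⟨rfl, rfl⟩
    exact hab (ho e))
  generalize (MGraph.projIter l (G.pw q) w).2 = f at key ⊢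
  rw [finsum_eq_sum_of_fintype]
  have hx : x ∉ S := by
    intro h
    have h0 : x ∈ G.desc x ∩ S := ⟨⟨[], rfl⟩, h⟩
    rw [hS] at h0
    exact h0.2 rfl
  have hw' : ∀ y, w y = f y - ∑ z ∈ l.toFinset, G.pw q y z • f z := by
    intro y
    rw [List.sum_toFinset _ hnd]
    exact eq_sub_of_add_eq (key y).symm
  have e1 : ∑ y, s x y • w y =
      ∑ y, s x y • f y - ∑ z ∈ l.toFinset, (∑ y, s x y * G.pw q y z) • f z := by
    simp only [Finset.sum_smul]
    rw [Finset.sum_comm, ← Finset.sum_sub_distrib]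
    apply Finset.sum_congr rfl
    intro y _
    rw [hw' y, smul_sub, Finset.smul_sum]
    simp only [mul_smul]
  have e2 : ∑ z ∈ l.toFinset, (∑ y, s x y * G.pw q y z) • f z =
      ∑ z ∈ Finset.univ.erase x, s x z • f z := by
    rw [← Finset.sum_subset (s₁ := l.toFinset) (s₂ := Finset.univ.erase x)]
    · apply Finset.sum_congr rfl
      intro z hz
      rw [hrec, if_neg]
      rintro rfl
      exact hx ((hmem _).1 (List.mem_toFinset.1 hz))
    · intro z hz
      simp only [Finset.mem_erase, Finset.mem_univ, and_true]
      rintro rfl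
      exact hx ((hmem _).1 (List.mem_toFinset.1 hz))
    · intro z hz hzl
      rw [hs.1 x z, zero_smul]
      intro hd
      have h0 : z ∈ G.desc x ∩ S := by
        rw [hS]
        exact ⟨hd, (Finset.mem_erase.1 hz).1⟩
      exact hzl (List.mem_toFinset.2 ((hmem z).2 h0.2))
  rw [e1, e2, ← Finset.add_sum_erase _ _ (Finset.mem_univ x), hs.2.1 x, one_smul]
  abel
end
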